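/- Let F be a finite field, let K = h + β with h ≥ 1 and β ≥ 1, let v ≥ 1, let N ≥ h + 2βv − β, and let f : Fin N → ((Fin K → F) → F) be an MDS family. Then there exist a subset T ⊆ Fin N with |T| = h + 2βv − β − 1 and a subset A ⊆ Fin K with |A| = β such that at most h − 1 indices n ∈ T have the property that f_n depends on no coordinate in A. -/

import Mathlib

/-!
For any set `A` of `β` inputs, at most `h` functions of an MDS family depend on no input in `A`
(`card_indep_le`): if `h + 1` did, complete them to a set of `h + β` functions, freeze the inputs
outside `A`, and let the inputs in `A` vary. Only the remaining `β - 1` functions can change, so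
`|F| ^ β` distinct messages would be told apart by at most `|F| ^ (β - 1)` values.

Since `N` exceeds the required size of `T` by at least one, `T` can be chosen to omit one of those
at most `h` functions (if there are any), whatever `A` is; this leaves at most `h - 1` of them in `T`.
-/

/-- `f` depends on coordinate `k` if changing only the `k`-th input can change the output. -/
def Depends {F : Type*} {K : ℕ} (f : (Fin K → F) → F) (k : Fin K) : Prop :=
  ∃ x y : Fin K → F, (∀ j : Fin K, j ≠ k → x j = y j) ∧ f x ≠ f y

/-- A family of encoding functions is MDS if for every `K`-subset `S` of encoding nodes,
the map from messages to the `S`-indexed tuple of coded symbols is injective. -/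
def IsMDSFamily {F : Type*} {N K : ℕ} (f : Fin N → ((Fin K → F) → F)) : Prop :=
  ∀ S : Finset (Fin N), S.card = K →
    Function.Injective (fun x : Fin K → F => fun n : S => f n x)

/-- A function depending on no coordinate of `A` is unaffected by simultaneous changes in `A`. -/
lemma eq_of_not_depends {F : Type*} {K : ℕ} (g : (Fin K → F) → F) (A : Finset (Fin K))
    (hA : ∀ k ∈ A, ¬ Depends g k) (x y : Fin K → F) (hxy : ∀ j, j ∉ A → x j = y j) :
    g x = g y := by
  classical
  induction A using Finset.induction_on generalizing x with
  | empty => exact congrArg g (funext fun j => hxy j (by simp))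
  | insert a s ha ih =>
    have h1 : g x = g (Function.update x a (y a)) := by
      by_contra hne
      exact hA a (by simp) ⟨x, _, fun j hj => by simp [hj], hne⟩
    rw [h1]
    refine ih (fun k hk => hA k (by simp [hk])) _ fun j hj => ?_
    by_cases hja : j = a
    · subst hja; simp
    · simp [hja, hxy j (by simp [hja, hj])]

lemma card_indep_le {F : Type*} [Field F] [Fintype F] {N h β : ℕ} (hβ : 1 ≤ β)
    (hN : h + β ≤ N) (f : Fin N → ((Fin (h + β) → F) → F)) (hMDS : IsMDSFamily f)
    (A : Finset (Fin (h + β))) (hA : A.card = β) (I : Finset (Fin N))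
    (hI : ∀ n ∈ I, ∀ k ∈ A, ¬ Depends (f n) k) : I.card ≤ h := by
  classical
  by_contra! hcard
  obtain ⟨J, hJI, hJ⟩ := Finset.exists_subset_card_eq (Nat.succ_le_of_lt hcard)
  obtain ⟨S, hJS, -, hS⟩ := Finset.exists_subsuperset_card_eq (Finset.subset_univ J)
    (show J.card ≤ h + β by omega) (by simpa using hN)
  -- Extend an assignment of the inputs in `A` by zero.
  let e : (A → F) → Fin (h + β) → F := fun a k => if hk : k ∈ A then a ⟨k, hk⟩ else 0
  have hinj : Function.Injective (fun a : A → F => fun n : ↥(S \ J) => f n (e a)) := by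
    intro a b hab
    have he : e a = e b := by
      apply hMDS S hS
      funext n
      by_cases hn : n.1 ∈ J
      · exact eq_of_not_depends _ A (hI _ (hJI hn)) _ _ fun j hj => by simp [e, hj]
      · exact congrFun hab ⟨n.1, Finset.mem_sdiff.2 ⟨n.2, hn⟩⟩
    funext k
    simpa [e] using congrFun he k
  have hle := Fintype.card_le_of_injective _ hinj
  simp only [Fintype.card_fun, Fintype.card_coe, Finset.card_sdiff_of_subset hJS, hS, hJ, hA]
    at hle
  have := (Nat.pow_le_pow_iff_right Fintype.one_lt_card).1 hle
  omega

/-- There exist `h + 2βv - β - 1` functions and `β` inputs so that at most `h - 1`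
of the chosen functions depend on none of the chosen inputs. -/
theorem stmt7 {F : Type*} [Field F] [Fintype F] {N h β v : ℕ}
    (hh : 1 ≤ h) (hβ : 1 ≤ β) (hv : 1 ≤ v) (hN : h + 2 * β * v - β ≤ N)
    (f : Fin N → ((Fin (h + β) → F) → F)) (hMDS : IsMDSFamily f) :
    ∃ T : Finset (Fin N), T.card = h + 2 * β * v - β - 1 ∧
      ∃ A : Finset (Fin (h + β)), A.card = β ∧
        {n : Fin N | n ∈ T ∧ ∀ k ∈ A, ¬ Depends (f n) k}.ncard ≤ h - 1 := by
  classical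
  have hβv : β ≤ β * v := Nat.le_mul_of_pos_right β hv
  have hKN : h + β ≤ N := by
    rw [mul_assoc] at hN
    omega
  obtain ⟨A, -, hA⟩ := Finset.exists_subset_card_eq
    (show β ≤ (Finset.univ : Finset (Fin (h + β))).card by simp)
  let I : Finset (Fin N) := Finset.univ.filter fun n => ∀ k ∈ A, ¬ Depends (f n) k
  have hI : I.card ≤ h := card_indep_le hβ hKN f hMDS A hA I fun n hn => by simpa [I] using hn
  -- If `I` is empty, any index may be dropped; otherwise drop a member of `I`.
  obtain ⟨m, hm⟩ : ∃ m : Fin N, (I.erase m).card ≤ h - 1 := by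
    rcases I.eq_empty_or_nonempty with h0 | ⟨m, hm⟩
    · exact ⟨⟨0, by omega⟩, by simp [h0]⟩
    · exact ⟨m, by rw [Finset.card_erase_of_mem hm]; omega⟩
  obtain ⟨T, hTm, hT⟩ := Finset.exists_subset_card_eq
    (show h + 2 * β * v - β - 1 ≤ (Finset.univ.erase m).card by
      rw [Finset.card_erase_of_mem (Finset.mem_univ m), Finset.card_univ, Fintype.card_fin]
      omega)
  refine ⟨T, hT, A, hA, le_trans ?_ hm⟩
  rw [← Set.ncard_coe_finset]
  refine Set.ncard_le_ncard (fun n hn => ?_) (Finset.finite_toSet _)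
  simpa [I] using And.intro hn.2 (Finset.ne_of_mem_erase (hTm hn.1))
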